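/- Let G be a finite simple graph and let S be an independent vertex-wise dominating set of G. Then the neighborhood N_G(S) := ⋃_{s∈S} N_G(s) is a minimal vertex cover of G. -/

import Mathlib

/-- `S` is an independent set of the graph `G`. -/
def IsIndepSet {V : Type*} (G : SimpleGraph V) (S : Set V) : Prop :=
  ∀ x ∈ S, ∀ y ∈ S, ¬ G.Adj x y

/-- `u` vertex-wise dominates the edge `xy`: `u ∈ N_G[x] ∪ N_G[y]`. -/
def VeDominates {V : Type*} (G : SimpleGraph V) (u x y : V) : Prop :=
  u = x ∨ u = y ∨ G.Adj u x ∨ G.Adj u y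

/-- `S` is a vertex-wise dominating set of `G`. -/
def IsVeDomSet {V : Type*} (G : SimpleGraph V) (S : Set V) : Prop :=
  ∀ x y : V, G.Adj x y → ∃ s ∈ S, VeDominates G s x y

/-- `W` is a vertex cover of `G`. -/
def IsVertexCover {V : Type*} (G : SimpleGraph V) (W : Set V) : Prop :=
  ∀ x y : V, G.Adj x y → x ∈ W ∨ y ∈ W

/-- `W` is a minimal vertex cover of `G`. -/
def IsMinVertexCover {V : Type*} (G : SimpleGraph V) (W : Set V) : Prop :=
  IsVertexCover G W ∧ ∀ W' ⊂ W, ¬ IsVertexCover G W'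

/-- `N_G(S) = ⋃_{s ∈ S} N_G(s)`. -/
def nbhdSet {V : Type*} (G : SimpleGraph V) (S : Set V) : Set V :=
  {v : V | ∃ s ∈ S, G.Adj s v}

/-!
An endpoint of an edge `xy` is adjacent to the other endpoint, so `u ∈ N_G[x] ∪ N_G[y]` already
means that `u` is adjacent to `x` or `y`. Hence `S` is vertex-wise dominating exactly when
`N_G(S)` is a vertex cover. If `S` is independent, then `N_G(S)` avoids `S`, while a vertex
cover avoiding `S` must contain the other endpoint of every edge at `S`, that is, all of
`N_G(S)`.
-/

section

variable {V : Type*} {G : SimpleGraph V} {S W : Set V}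

theorem veDominates_iff_of_adj {u x y : V} (hxy : G.Adj x y) :
    VeDominates G u x y ↔ G.Adj u x ∨ G.Adj u y := by
  constructor
  · rintro (rfl | rfl | hux | huy)
    · exact .inr hxy
    · exact .inl hxy.symm
    · exact .inl hux
    · exact .inr huy
  · exact fun h ↦ .inr (.inr h)

theorem isVeDomSet_iff_isVertexCover_nbhdSet : IsVeDomSet G S ↔ IsVertexCover G (nbhdSet G S) := by
  refine forall₃_congr fun x y hxy ↦ ?_
  simp only [veDominates_iff_of_adj hxy, nbhdSet, Set.mem_ofPred_eq, and_or_left, exists_or]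

theorem isIndepSet_iff_disjoint_nbhdSet : IsIndepSet G S ↔ Disjoint S (nbhdSet G S) := by
  rw [Set.disjoint_right]
  exact ⟨fun h v ⟨s, hs, hsv⟩ hv ↦ h s hs v hv hsv, fun h s hs v hv hsv ↦ h ⟨s, hs, hsv⟩ hv⟩

theorem IsVertexCover.nbhdSet_subset (hW : IsVertexCover G W) (hSW : Disjoint S W) :
    nbhdSet G S ⊆ W := by
  rintro v ⟨s, hs, hsv⟩
  exact (hW s v hsv).resolve_left (hSW.notMem_of_mem_left hs)

theorem nbhd_of_indep_veDom_isMinVertexCover_general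
    (hindep : IsIndepSet G S) (hdom : IsVeDomSet G S) : IsMinVertexCover G (nbhdSet G S) := by
  refine ⟨isVeDomSet_iff_isVertexCover_nbhdSet.mp hdom, fun W hW hcover ↦ ?_⟩
  have hSW : Disjoint S W := (isIndepSet_iff_disjoint_nbhdSet.mp hindep).mono_right hW.subset
  exact hW.not_subset (hcover.nbhdSet_subset hSW)

end

/-- If `S` is an independent vertex-wise dominating set of a
finite simple graph `G`, then `N_G(S)` is a minimal vertex cover of `G`. -/
theorem nbhd_of_indep_veDom_isMinVertexCover {V : Type*} [Fintype V] [DecidableEq V]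
    (G : SimpleGraph V) (S : Set V)
    (hindep : IsIndepSet G S) (hdom : IsVeDomSet G S) :
    IsMinVertexCover G (nbhdSet G S) := by
  exact nbhd_of_indep_veDom_isMinVertexCover_general hindep hdom
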